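/- arXiv:1203.6766 — 2 statements merged into one kernel-verified Lean document; each statement's English description precedes it below -/
import Mathlib

section
/- Let N ∈ ℤ_{≥0} and let (a_i)_{i∈I_{≤N}} be a family of elements of E. Then there exist a constant C ∈ ℝ_{≥0} and n₀ ∈ ℤ_{≥0} such that for every h ≥ n₀ one has sup_{i∈I_{≤N}} |a_i|·q^{−h|i|} ≤ C · sup_{z∈ϖ_F^h𝒪_F} |Σ_{i∈I_{≤N}} a_i·z^i/i!|. -/
/-!
Setting (cf. the paper's notations): `O` plays the role of the ring of integers `𝒪_F` of a
finite extension `F` of `ℚ_p`, `E` is the coefficient field (a finite extension of `ℚ_p`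
with its p-adic absolute value, normalized by `|x| = p^{-val_F(x)}`, `val_F(p) = [F:ℚ_p]`),
`S` is the (finite) set of `ℚ_p`-algebra embeddings `F ↪ E`, restricted here to `O`,
`ν : O → ℝ` is the absolute value on `O` (the common restriction of the norm of `E` along any
embedding), `ϖ` is a fixed uniformizer with `ν ϖ = q⁻¹` where `q = p^f` is the cardinality
of the residue field, and `u * ϖ ^ e = p` records the ramification index `e`.
-/

open scoped Classical

noncomputable section

namespace CrPaper

structure Setting (S O E : Type*) [Fintype S] [CommRing O] [NormedField E] where
  q : ℝ
  p : ℕ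
  fdeg : ℕ
  hp : p.Prime
  hfdeg : 0 < fdeg
  hq : q = (p : ℝ) ^ fdeg
  emb : S → O →+* E
  emb_inj : ∀ s, Function.Injective (emb s)
  emb_distinct : Function.Injective emb
  ν : O → ℝ
  norm_emb : ∀ (s) (z : O), ‖emb s z‖ = ν z
  norm_le_one : ∀ (s) (z : O), ‖emb s z‖ ≤ 1
  norm_add_max : ∀ x y : E, ‖x + y‖ ≤ max ‖x‖ ‖y‖
  ϖ : O
  ν_ϖ : ν ϖ = q⁻¹
  mem_ball_iff : ∀ (y : O) (n : ℕ), (∃ z, y = ϖ ^ n * z) ↔ ν y ≤ q⁻¹ ^ n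
  ram : ∃ (e : ℕ) (u : O), 0 < e ∧ IsUnit u ∧ u * ϖ ^ e = (p : O)

variable {S O E : Type*} [Fintype S] [DecidableEq S] [CommRing O] [IsDomain O]
  [NormedField E] [CompleteSpace E] [CharZero E]

/-- The total weight `|i| = ∑ i_σ` of a multi-index. -/
def wt (i : S → ℕ) : ℕ := ∑ s, i s

/-- `i! = ∏ i_σ!` for a multi-index. -/
def mfact (i : S → ℕ) : ℕ := ∏ s, (i s).factorial

/-- The (finite) set `I_{≤N}` of multi-indices of total weight `≤ N`. -/
def Idx (S : Type*) [Fintype S] [DecidableEq S] (N : ℕ) : Finset (S → ℕ) :=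
  (Fintype.piFinset fun _ : S => Finset.range (N + 1)).filter fun i => wt i ≤ N

/-- `z^i = ∏_σ σ(z)^{i_σ}`. -/
def mpow (St : Setting S O E) (z : O) (i : S → ℕ) : E := ∏ s, St.emb s z ^ i s

/-- The Taylor remainder `ε_{f,N}(x,y) = f(x+y) − ∑_{|i|≤N} D_i f(x) y^i / i!`. -/
def epsTay (St : Setting S O E) (N : ℕ) (f : O → E) (D : (S → ℕ) → O → E) (x y : O) : E :=
  f (x + y) - ∑ i ∈ Idx S N, D i x * mpow St y i / (mfact i : E)

/-- `f` is of class `C^r` with the family of bounded functions `D` witnessing the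
definition: all `D_i` (`|i| ≤ ⌊r⌋`) are bounded and
`C_{f,r}(h) = sup_{x ∈ O, y ∈ ϖ^h O} |ε_{f,⌊r⌋}(x,y)| q^{rh} → 0` as `h → ∞`. -/
def IsCrWith (St : Setting S O E) (r : ℝ) (f : O → E) (D : (S → ℕ) → O → E) : Prop :=
  (∀ i ∈ Idx S ⌊r⌋₊, ∃ C : ℝ, ∀ x : O, ‖D i x‖ ≤ C) ∧
  ∀ ε : ℝ, 0 < ε → ∃ M : ℕ, ∀ h : ℕ, M ≤ h → ∀ x z : O,
    ‖epsTay St ⌊r⌋₊ f D x (St.ϖ ^ h * z)‖ * St.q ^ (r * (h : ℝ)) ≤ ε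

/-- `f` is of class `C^r`. -/
def IsCr (St : Setting S O E) (r : ℝ) (f : O → E) : Prop :=
  ∃ D, IsCrWith St r f D

/-- The `C^r`-norm of `f` (relative to the — unique — family `D`):
`max( sup_{i,x} |D_i f(x)/i!| , sup_{x,y} |ε_{f,⌊r⌋}(x,y)|/|y|^r )`. -/
def CrNorm (St : Setting S O E) (r : ℝ) (f : O → E) (D : (S → ℕ) → O → E) : ℝ :=
  max (⨆ i : (Idx S ⌊r⌋₊), ⨆ x : O, ‖D i.1 x / (mfact i.1 : E)‖)
      (⨆ x : O, ⨆ y : O, ‖epsTay St ⌊r⌋₊ f D x y‖ / St.ν y ^ r)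

/-!
Finitely many distinct homomorphisms into a torsion-free group take pairwise distinct values at some
common point `x`, since a group is not a finite union of subgroups of infinite index. Restricting the monomials `z ↦ z^i` to the
line `n - x`, `n ∈ ℕ`, turns them into products of linear factors with distinct roots, so they are
pairwise distinct characters and, by Dedekind, linearly independent. Hence each coefficient of
`∑ b_j z^j` is a fixed finite linear combination of the values of that sum, which bounds it by their
supremum. The bound is uniform in `b`, and the substitution `z ↦ ϖ^h z` only rescales `b_j` by the
value of the monomial at `ϖ^h`, of norm `q^{-h|j|}`: so the constant depends neither on `h` nor on
the family `a`.
-/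

open scoped Pointwise in
theorem exists_injective_apply {ι A M : Type*} [Finite ι] [AddGroup A] [AddMonoid M]
    [IsAddTorsionFree M] {φ : ι → A →+ M} (hφ : Function.Injective φ) :
    ∃ x, Function.Injective fun s => φ s x := by
  have := Fintype.ofFinite ι
  by_contra! hcon
  let distinct : Finset (ι × ι) := {st | st.1 ≠ st.2}
  have hcover : ⋃ st ∈ distinct, (0 : A) +ᵥ ((φ st.1).eqLocus (φ st.2) : Set A) = Set.univ := by
    refine Set.eq_univ_of_forall fun x => ?_
    obtain ⟨s, t, hx, hst⟩ := Function.not_injective_iff.mp (hcon x)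
    simp only [zero_vadd, Set.mem_iUnion]
    exact ⟨(s, t), by simpa [distinct] using hst, hx⟩
  obtain ⟨⟨s, t⟩, hst, hfin⟩ := AddSubgroup.exists_finiteIndex_of_leftCoset_cover hcover
  refine (Finset.mem_filter.mp hst).2 (hφ (AddMonoidHom.ext fun x => ?_))
  obtain ⟨n, hn, -, hmem⟩ := AddSubgroup.exists_nsmul_mem_of_index_ne_zero hfin.index_ne_zero x
  have hmul : φ s (n • x) = φ t (n • x) := hmem
  rw [map_nsmul, map_nsmul] at hmul
  exact IsAddTorsionFree.nsmul_right_injective hn.ne' hmul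

open Polynomial in
theorem prod_X_sub_C_pow_injective {ι R : Type*} [Fintype ι] [CommRing R] [IsDomain R]
    {c : ι → R} (hc : Function.Injective c) :
    Function.Injective fun i : ι → ℕ => ∏ s, (X - C (c s)) ^ i s := by
  have count_roots_eq (i : ι → ℕ) (t : ι) :
      (∏ s, (X - C (c s)) ^ i s).roots.count (c t) = i t := by
    have hne : ∏ s, (X - C (c s)) ^ i s ≠ 0 :=
      Finset.prod_ne_zero_iff.mpr fun s _ => pow_ne_zero _ (X_sub_C_ne_zero _)
    rw [roots_prod _ _ hne, Multiset.count_bind]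
    simp [Multiset.count_singleton, hc.eq_iff]
  intro i j hij
  funext t
  rw [← count_roots_eq i t, ← count_roots_eq j t]
  exact congrArg (fun P => P.roots.count (c t)) hij

open Polynomial in
theorem prod_ringHom_pow_injective {ι R K : Type*} [Fintype ι] [Ring R] [CommRing K] [IsDomain K]
    [CharZero K] {φ : ι → R →+* K} (hφ : Function.Injective φ) :
    Function.Injective fun i : ι → ℕ => ∏ s, (φ s : R →* K) ^ i s := by
  have hφ' : Function.Injective fun s => (φ s : R →+ K) :=
    RingHom.coe_addMonoidHom_injective.comp hφ
  obtain ⟨x, hx⟩ := exists_injective_apply hφ'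
  intro i j hij
  refine prod_X_sub_C_pow_injective hx (Polynomial.eq_of_infinite_eval_eq _ _ ?_)
  refine (Set.infinite_range_of_injective (Nat.cast_injective (R := K))).mono ?_
  rintro _ ⟨n, rfl⟩
  have heval := DFunLike.congr_fun hij ((n : R) - x)
  simpa [eval_prod] using heval

theorem exists_finsupp_sum_mul_eq_coeff {κ Z K : Type*} [Fintype κ] [Field K] {g : κ → Z → K}
    (hg : LinearIndependent K g) (i : κ) :
    ∃ c : Z →₀ K, ∀ b : κ → K, (c.sum fun z m => m * ∑ j, b j * g j z) = b i := by
  have hmem : Pi.single i 1 ∈ Submodule.span K (Set.range (flip g)) :=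
    span_flip_eq_top_iff_linearIndependent.mpr hg ▸ Submodule.mem_top
  obtain ⟨c, hc⟩ := Finsupp.mem_span_range_iff_exists_finsupp.mp hmem
  refine ⟨c, fun b => ?_⟩
  calc (c.sum fun z m => m * ∑ j, b j * g j z)
      = ∑ j, b j * (c.sum fun z m => m • flip g z) j := by
        simp only [Finsupp.sum, Finset.mul_sum, Finset.sum_apply, Pi.smul_apply, smul_eq_mul, flip]
        rw [Finset.sum_comm]
        exact Finset.sum_congr rfl fun j _ => Finset.sum_congr rfl fun z _ => by ring
    _ = b i := by simp [hc, Pi.single_apply]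

theorem exists_norm_coeff_le_mul_iSup {κ Z K : Type*} [NormedField K] {g : κ → Z → K}
    (hg : LinearIndependent K g) (hbdd : ∀ j, BddAbove (Set.range fun z => ‖g j z‖))
    (I : Finset κ) :
    ∃ C : ℝ, 0 ≤ C ∧ ∀ b : κ → K, ∀ i ∈ I, ‖b i‖ ≤ C * ⨆ z, ‖∑ j ∈ I, b j * g j z‖ := by
  choose c hc using
    exists_finsupp_sum_mul_eq_coeff (hg.comp (Subtype.val : I → κ) Subtype.val_injective)
  have hnonneg (k : I) : 0 ≤ (c k).sum fun _ m => ‖m‖ := Finset.sum_nonneg fun _ _ => norm_nonneg _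
  refine ⟨∑ k, (c k).sum fun _ m => ‖m‖, Finset.sum_nonneg fun k _ => hnonneg k,
    fun b i hi => ?_⟩
  have hsum_bdd : BddAbove (Set.range fun z => ‖∑ j ∈ I, b j * g j z‖) := by
    choose B hB using hbdd
    refine ⟨∑ j ∈ I, ‖b j‖ * B j, ?_⟩
    rintro _ ⟨z, rfl⟩
    refine norm_sum_le_of_le I fun j _ => ?_
    rw [norm_mul]
    exact mul_le_mul_of_nonneg_left (hB j ⟨z, rfl⟩) (norm_nonneg _)
  have hcoeff : ((c ⟨i, hi⟩).sum fun z m => m * ∑ j ∈ I, b j * g j z) = b i := by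
    simpa only [Function.comp_apply, ← Finset.sum_coe_sort I]
      using hc ⟨i, hi⟩ fun j => b j
  calc ‖b i‖ ≤ (c ⟨i, hi⟩).sum fun z m => ‖m‖ * ‖∑ j ∈ I, b j * g j z‖ := by
        rw [← hcoeff]
        exact norm_sum_le_of_le _ fun z _ => (norm_mul _ _).le
    _ ≤ ((c ⟨i, hi⟩).sum fun _ m => ‖m‖) * ⨆ z, ‖∑ j ∈ I, b j * g j z‖ := by
        simp only [Finsupp.sum, Finset.sum_mul]
        exact Finset.sum_le_sum fun z _ =>
          mul_le_mul_of_nonneg_left (le_ciSup hsum_bdd z) (norm_nonneg _)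
    _ ≤ _ := mul_le_mul_of_nonneg_right
        (Finset.single_le_sum (fun k _ => hnonneg k) (Finset.mem_univ (⟨i, hi⟩ : I)))
        (Real.iSup_nonneg fun _ => norm_nonneg _)

section Monomials

omit [DecidableEq S] [IsDomain O] [CompleteSpace E] [CharZero E]

theorem mfact_ne_zero (i : S → ℕ) : mfact i ≠ 0 :=
  Finset.prod_ne_zero_iff.mpr fun _ _ => Nat.factorial_ne_zero _

/-- The monomial `z ↦ z^i` as a multiplicative character of `O`, the form in which Dedekind's
theorem on the independence of characters applies to it. -/
def mpowHom (St : Setting S O E) (i : S → ℕ) : O →* E := ∏ s, (St.emb s : O →* E) ^ i s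

theorem mpowHom_apply (St : Setting S O E) (i : S → ℕ) (z : O) : mpowHom St i z = mpow St z i := by
  simp [mpowHom, mpow]

theorem mpow_mul (St : Setting S O E) (y z : O) (i : S → ℕ) :
    mpow St (y * z) i = mpow St y i * mpow St z i := by
  simp only [← mpowHom_apply, map_mul]

theorem norm_mpow (St : Setting S O E) (z : O) (i : S → ℕ) : ‖mpow St z i‖ = St.ν z ^ wt i := by
  simp only [mpow, wt, norm_prod, norm_pow, St.norm_emb, Finset.prod_pow_eq_pow_sum]

theorem norm_mpow_le_one (St : Setting S O E) (z : O) (i : S → ℕ) : ‖mpow St z i‖ ≤ 1 := by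
  rw [mpow, norm_prod]
  refine Finset.prod_le_one (fun _ _ => norm_nonneg _) fun s _ => ?_
  rw [norm_pow]
  exact pow_le_one₀ (norm_nonneg _) (St.norm_le_one s z)

theorem norm_mpow_uniformizer_pow (St : Setting S O E) (h : ℕ) (i : S → ℕ) :
    ‖mpow St (St.ϖ ^ h) i‖ = St.q ^ (-((h : ℝ) * (wt i : ℝ))) := by
  have hq : 0 ≤ St.q := St.hq ▸ by positivity
  rw [← mpowHom_apply, map_pow, mpowHom_apply, norm_pow, norm_mpow, St.ν_ϖ, inv_pow, inv_pow,
    ← pow_mul, Real.rpow_neg hq, ← Nat.cast_mul, Real.rpow_natCast, mul_comm]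

theorem linearIndependent_mpow [CharZero E] (St : Setting S O E) :
    LinearIndependent E fun (i : S → ℕ) (z : O) => mpow St z i := by
  simp only [← mpowHom_apply]
  exact (linearIndependent_monoidHom O E).comp (mpowHom St)
    (prod_ringHom_pow_injective St.emb_distinct)

theorem statement2_general [CharZero E] (St : Setting S O E) (I : Finset (S → ℕ)) :
    ∃ C : ℝ, 0 ≤ C ∧ ∀ (a : (S → ℕ) → E) (h : ℕ), ∀ i ∈ I,
      ‖a i‖ * St.q ^ (-((h : ℝ) * (wt i : ℝ))) ≤
        C * ⨆ z : O, ‖∑ j ∈ I, a j * mpow St (St.ϖ ^ h * z) j / (mfact j : E)‖ := by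
  obtain ⟨C, hC, hcoeff⟩ := exists_norm_coeff_le_mul_iSup (linearIndependent_mpow St)
    (fun j => ⟨1, Set.forall_mem_range.mpr fun z => norm_mpow_le_one St z j⟩) I
  let F : ℝ := ∑ j ∈ I, ‖(mfact j : E)‖
  refine ⟨F * C, mul_nonneg (Finset.sum_nonneg fun _ _ => norm_nonneg _) hC, fun a h i hi => ?_⟩
  let b (j : S → ℕ) : E := a j * mpow St (St.ϖ ^ h) j / (mfact j : E)
  have hrescale (z : O) :
      ∑ j ∈ I, a j * mpow St (St.ϖ ^ h * z) j / (mfact j : E) = ∑ j ∈ I, b j * mpow St z j :=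
    Finset.sum_congr rfl fun j _ => by rw [mpow_mul]; ring
  have hmfact : (mfact i : E) ≠ 0 := Nat.cast_ne_zero.mpr (mfact_ne_zero i)
  simp only [hrescale]
  calc ‖a i‖ * St.q ^ (-((h : ℝ) * (wt i : ℝ))) = ‖(mfact i : E)‖ * ‖b i‖ := by
        rw [← norm_mpow_uniformizer_pow, ← norm_mul, ← norm_mul, mul_div_cancel₀ _ hmfact]
    _ ≤ F * (C * ⨆ z, ‖∑ j ∈ I, b j * mpow St z j‖) :=
        mul_le_mul
          (Finset.single_le_sum (f := fun j => ‖(mfact j : E)‖) (fun _ _ => norm_nonneg _) hi)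
          (hcoeff b i hi) (norm_nonneg _) (Finset.sum_nonneg fun _ _ => norm_nonneg _)
    _ = F * C * ⨆ z, ‖∑ j ∈ I, b j * mpow St z j‖ := (mul_assoc _ _ _).symm

end Monomials

/-- for a family `(a_i)_{i ∈ I_{≤N}}` of elements of `E`, there are `C ≥ 0` and
`n₀` such that for all `h ≥ n₀`,
`sup_{i ∈ I_{≤N}} |a_i| q^{−h|i|} ≤ C · sup_{z ∈ ϖ^h O} |∑_i a_i z^i/i!|`. -/
theorem statement2 (St : Setting S O E) (N : ℕ) (a : (S → ℕ) → E) :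
    ∃ (C : ℝ) (n₀ : ℕ), 0 ≤ C ∧
      ∀ h : ℕ, n₀ ≤ h → ∀ i ∈ Idx S N,
        ‖a i‖ * St.q ^ (-((h : ℝ) * (wt i : ℝ))) ≤
          C * ⨆ z : O, ‖∑ j ∈ Idx S N, a j * mpow St (St.ϖ ^ h * z) j / (mfact j : E)‖ := by
  obtain ⟨C, hC, hbound⟩ := statement2_general St (Idx S N)
  exact ⟨C, 0, hC, fun h _ => hbound a h⟩

end CrPaper
end
end

section
/- Let f ∈ C^r(𝒪_F,E) and let i, j ∈ I_{≤[r]} be multi-indices with |i| + |j| ≤ [r]. Then D_j(D_i f) = D_{i+j} f (where D_j(D_i f) is the unique family attached to the function D_i f, which is of class C^{r−|i|}). -/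
/-!
Setting (cf. the paper's notations): `O` plays the role of the ring of integers `𝒪_F` of a
finite extension `F` of `ℚ_p`, `E` is the coefficient field (a finite extension of `ℚ_p`
with its p-adic absolute value, normalized by `|x| = p^{-val_F(x)}`, `val_F(p) = [F:ℚ_p]`),
`S` is the (finite) set of `ℚ_p`-algebra embeddings `F ↪ E`, restricted here to `O`,
`ν : O → ℝ` is the absolute value on `O` (the common restriction of the norm of `E` along any
embedding), `ϖ` is a fixed uniformizer with `ν ϖ = q⁻¹` where `q = p^f` is the cardinality
of the residue field, and `u * ϖ ^ e = p` records the ramification index `e`.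
-/

open scoped Classical

noncomputable section

namespace CrPaper

variable {S O E : Type*} [Fintype S] [DecidableEq S] [CommRing O] [IsDomain O]
  [NormedField E] [CompleteSpace E] [CharZero E]

/-!
The functions `z ↦ ∏ σ(z)^{k_σ}` for distinct multi-indices `k` are distinct multiplicative
characters, hence linearly independent (Dedekind). So each coefficient of a polynomial of degree
`≤ N` in the `σ(z)` is a fixed finite combination of its values at points of `O`, and rescaling by
`ϖ^h` shows that if the values on `ϖ^h O` are at most `ε q^{-rh}`, then the coefficient of index `k`
is at most `C ε q^{-(r-|k|)h}` with `C` independent of `h`. This bound is used twice. Expanding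
`f(x+y+w)` around `x` and around `x+y` exhibits `ε_f(x,y+w) - ε_f(x+y,w)` as a polynomial in `w`
whose coefficients are the Taylor remainders of `D_i f` for the family `(D_{i+j} f)_j`; hence that
family makes `D_i f` of class `C^{r-|i|}`. The difference of two Taylor families of the same
function is controlled in the same way, so the family is unique.
-/

section MultiIndex

variable {ι : Type*} [Fintype ι]

theorem wt_add (i j : ι → ℕ) : wt (i + j) = wt i + wt j :=
  Finset.sum_add_distrib

theorem mem_Idx [DecidableEq ι] {N : ℕ} {i : ι → ℕ} : i ∈ Idx ι N ↔ wt i ≤ N := by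
  simp only [Idx, Finset.mem_filter, Fintype.mem_piFinset, Finset.mem_range,
    and_iff_right_iff_imp]
  exact fun hi s ↦
    Nat.lt_succ_of_le ((Finset.single_le_sum_of_canonicallyOrdered (Finset.mem_univ s)).trans hi)

theorem sum_Idx_sum_Iic [DecidableEq ι] {M : Type*} [AddCommMonoid M] (N : ℕ)
    (F : (ι → ℕ) → (ι → ℕ) → M) :
    ∑ k ∈ Idx ι N, ∑ i ∈ Finset.Iic k, F i (k - i) =
      ∑ i ∈ Idx ι N, ∑ j ∈ Idx ι (N - wt i), F i j := by
  rw [Finset.sum_sigma', Finset.sum_sigma']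
  refine Finset.sum_bij' (fun x _ ↦ ⟨x.2, x.1 - x.2⟩) (fun x _ ↦ ⟨x.1 + x.2, x.1⟩) ?_ ?_ ?_ ?_ ?_
  · rintro ⟨k, i⟩ hx
    simp only [Finset.mem_sigma, mem_Idx, Finset.mem_Iic] at hx ⊢
    obtain ⟨j, rfl⟩ := exists_add_of_le hx.2
    rw [wt_add] at hx
    rw [add_tsub_cancel_left]
    omega
  · rintro ⟨i, j⟩ hx
    simp only [Finset.mem_sigma, mem_Idx, Finset.mem_Iic, wt_add] at hx ⊢
    exact ⟨by omega, le_self_add⟩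
  · rintro ⟨k, i⟩ hx
    simp only [Finset.mem_sigma, Finset.mem_Iic] at hx
    simp only [add_tsub_cancel_of_le hx.2]
  · rintro ⟨i, j⟩ -
    simp only [add_tsub_cancel_left]
  · exact fun _ _ ↦ rfl

end MultiIndex

section DividedMonomial

variable {ι K : Type*} [Fintype ι] [Field K]

/-- The divided monomial `v^k / k!` in the coordinates of the vector `v`. -/
def dividedMonomial (v : ι → K) (k : ι → ℕ) : K :=
  ∏ s, v s ^ k s / (k s).factorial

theorem dividedMonomial_mul (a v : ι → K) (k : ι → ℕ) :
    dividedMonomial (a * v) k = (∏ s, a s ^ k s) * dividedMonomial v k := by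
  simp only [dividedMonomial, Pi.mul_apply, mul_pow, mul_div_assoc, Finset.prod_mul_distrib]

/-- The polynomial of degree `≤ N` with Taylor coefficients `d`, evaluated at `v`. -/
def taylorPoly [DecidableEq ι] (N : ℕ) (d : (ι → ℕ) → K) (v : ι → K) : K :=
  ∑ k ∈ Idx ι N, d k * dividedMonomial v k

theorem taylorPoly_sub [DecidableEq ι] (N : ℕ) (d d' : (ι → ℕ) → K) (v : ι → K) :
    taylorPoly N (d - d') v = taylorPoly N d v - taylorPoly N d' v := by
  simp only [taylorPoly, Pi.sub_apply, sub_mul, Finset.sum_sub_distrib]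

variable [CharZero K]

theorem add_pow_div_factorial (x y : K) (n : ℕ) :
    (x + y) ^ n / n.factorial =
      ∑ m ∈ Finset.Iic n, x ^ m / m.factorial * (y ^ (n - m) / (n - m).factorial) := by
  rw [add_pow, Nat.range_succ_eq_Iic, Finset.sum_div]
  refine Finset.sum_congr rfl fun m hm ↦ ?_
  have factorial_ne_zero (a : ℕ) : (a.factorial : K) ≠ 0 := mod_cast a.factorial_ne_zero
  rw [Nat.cast_choose K (Finset.mem_Iic.mp hm)]
  field_simp [factorial_ne_zero]

theorem dividedMonomial_add [DecidableEq ι] (v w : ι → K) (k : ι → ℕ) :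
    dividedMonomial (v + w) k =
      ∑ i ∈ Finset.Iic k, dividedMonomial v i * dividedMonomial w (k - i) := by
  simp only [dividedMonomial, Pi.add_apply, add_pow_div_factorial, Finset.prod_univ_sum,
    Finset.prod_mul_distrib, Pi.sub_apply]
  congr 1

theorem taylorPoly_add [DecidableEq ι] (N : ℕ) (d : (ι → ℕ) → K) (v w : ι → K) :
    taylorPoly N d (v + w) =
      taylorPoly N (fun i ↦ taylorPoly (N - wt i) (fun j ↦ d (i + j)) v) w := by
  have split_coeff : ∀ k ∈ Idx ι N, d k * dividedMonomial (v + w) k =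
      ∑ i ∈ Finset.Iic k,
        d (i + (k - i)) * dividedMonomial v (k - i) * dividedMonomial w i := by
    intro k _
    rw [add_comm v, dividedMonomial_add, Finset.mul_sum]
    refine Finset.sum_congr rfl fun i hi ↦ ?_
    rw [add_tsub_cancel_of_le (Finset.mem_Iic.mp hi)]
    ring
  simp only [taylorPoly, Finset.sum_mul]
  rw [Finset.sum_congr rfl split_coeff,
    sum_Idx_sum_Iic N fun i j ↦ d (i + j) * dividedMonomial v j * dividedMonomial w i]

end DividedMonomial

section Independence

open Polynomial in
/-- Comparing `∏ s, (X + χ s w) ^ k s` with its analogue for `l` at the infinitely many points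
`n ∈ ℕ`, and then their subleading coefficients, gives `∑ s, k s * χ s w = ∑ s, l s * χ s w`. -/
theorem injective_prod_pow_monoidHom {ι R K : Type*} [Fintype ι] [Semiring R] [CommRing K]
    [IsDomain K] [CharZero K] {χ : ι → R →+* K} (hχ : Function.Injective χ) :
    Function.Injective fun k : ι → ℕ ↦ ∏ s, (χ s : R →* K) ^ k s := by
  intro k l hkl
  let P (w : R) (m : ι → ℕ) : K[X] := ∏ s, (X + C (χ s w)) ^ m s
  have eval_P (w : R) (m : ι → ℕ) (n : ℕ) :
      (P w m).eval (n : K) = (∏ s, (χ s : R →* K) ^ m s) (n + w) := by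
    simp [P, eval_prod]
  have nextCoeff_P (w : R) (m : ι → ℕ) : (P w m).nextCoeff = ∑ s, (m s : K) * χ s w := by
    simp only [P]
    rw [Monic.nextCoeff_prod _ _ fun s _ ↦ (monic_X_add_C _).pow _]
    simp only [(monic_X_add_C _).nextCoeff_pow, nextCoeff_X_add_C, nsmul_eq_mul]
  have P_eq (w : R) : P w k = P w l := by
    refine eq_of_infinite_eval_eq _ _
      ((Set.infinite_range_of_injective (Nat.cast_injective (R := K))).mono ?_)
    rintro _ ⟨n, rfl⟩
    exact (eval_P w k n).trans ((DFunLike.congr_fun hkl _).trans (eval_P w l n).symm)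
  have characters_independent : LinearIndependent K fun s ↦ ⇑(χ s : R →* K) :=
    (linearIndependent_monoidHom R K).comp _ (RingHom.coe_monoidHom_injective.comp hχ)
  have combination_eq : ∑ s, (k s : K) • ⇑(χ s : R →* K) = ∑ s, (l s : K) • ⇑(χ s : R →* K) := by
    funext w
    simpa [nextCoeff_P] using congrArg nextCoeff (P_eq w)
  funext s
  exact_mod_cast Fintype.linearIndependent_iffₛ.mp characters_independent _ _ combination_eq s

theorem linearIndependent_dividedMonomial {ι R K : Type*} [Fintype ι] [Semiring R] [Field K]
    [CharZero K] {χ : ι → R →+* K} (hχ : Function.Injective χ) :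
    LinearIndependent K fun (k : ι → ℕ) (z : R) ↦ dividedMonomial (RingHom.pi χ z) k := by
  have inv_mfact_ne_zero (k : ι → ℕ) : ((mfact k : K)⁻¹) ≠ 0 :=
    inv_ne_zero (mod_cast Finset.prod_ne_zero_iff.mpr fun s _ ↦ (k s).factorial_ne_zero)
  have scaled := ((linearIndependent_monoidHom R K).comp _
    (injective_prod_pow_monoidHom hχ)).units_smul fun k ↦ Units.mk0 _ (inv_mfact_ne_zero k)
  convert! scaled using 1
  funext k z
  simp [dividedMonomial, mfact, Units.smul_def, Finset.prod_mul_distrib, div_eq_inv_mul]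

theorem exists_sum_smul_eval_eq_single {ι α K : Type*} [Finite ι] [DecidableEq ι] [Field K]
    {v : ι → α → K} (hv : LinearIndependent K v) (k : ι) :
    ∃ c : α →₀ K, ∑ z ∈ c.support, c z • flip v z = Pi.single k 1 := by
  refine Finsupp.mem_span_range_iff_exists_finsupp.mp ?_
  rw [span_flip_eq_top_iff_linearIndependent.mpr hv]
  exact Submodule.mem_top

theorem exists_norm_coeff_le_of_linearIndependent {ι α K : Type*} [NormedField K]
    {v : ι → α → K} (hv : LinearIndependent K v) {T : Finset ι} {k : ι} (hk : k ∈ T) :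
    ∃ C : ℝ, 0 < C ∧ ∀ (b : ι → K) (δ : ℝ), (∀ z, ‖∑ l ∈ T, b l * v l z‖ ≤ δ) →
      ‖b k‖ ≤ C * δ := by
  obtain ⟨c, hc⟩ := exists_sum_smul_eval_eq_single
    (hv.comp ((↑) : T → ι) Subtype.val_injective) ⟨k, hk⟩
  have support_nonempty : c.support.Nonempty := by
    by_contra! h
    simpa [h] using congrFun hc ⟨k, hk⟩
  refine ⟨∑ z ∈ c.support, ‖c z‖,
    Finset.sum_pos (fun z hz ↦ norm_pos_iff.mpr (Finsupp.mem_support_iff.mp hz)) support_nonempty,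
    fun b δ hb ↦ ?_⟩
  have coeff_eq : b k = ∑ z ∈ c.support, c z * ∑ l ∈ T, b l * v l z := by
    have eval_eq (l : T) :
        ∑ z ∈ c.support, c z * v l z = (Pi.single ⟨k, hk⟩ 1 : T → K) l := by
      simpa [flip] using congrFun hc l
    calc b k = ∑ l : T, b l * ∑ z ∈ c.support, c z * v l z := by
          simp [eval_eq, Pi.single_apply]
      _ = ∑ z ∈ c.support, c z * ∑ l ∈ T, b l * v l z := by
          simp only [← Finset.sum_coe_sort T, Finset.mul_sum]
          rw [Finset.sum_comm]
          simp only [mul_left_comm]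
  calc ‖b k‖ ≤ ∑ z ∈ c.support, ‖c z * ∑ l ∈ T, b l * v l z‖ := coeff_eq ▸ norm_sum_le _ _
    _ ≤ ∑ z ∈ c.support, ‖c z‖ * δ := by
        gcongr with z
        exact (norm_mul_le _ _).trans (by gcongr; exact hb z)
    _ = (∑ z ∈ c.support, ‖c z‖) * δ := (Finset.sum_mul ..).symm

end Independence

theorem norm_sub_mul_le_add {V : Type*} [SeminormedAddCommGroup V] {a b : V} {Q ε δ : ℝ}
    (hQ : 0 ≤ Q) (ha : ‖a‖ * Q ≤ ε) (hb : ‖b‖ * Q ≤ δ) : ‖a - b‖ * Q ≤ ε + δ :=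
  calc ‖a - b‖ * Q ≤ (‖a‖ + ‖b‖) * Q := by gcongr; exact norm_sub_le a b
    _ ≤ ε + δ := by rw [add_mul]; exact add_le_add ha hb

section Taylor

variable {ι R K : Type*} [Fintype ι] [CommRing R] [NormedField K]

theorem Setting.one_lt_q (St : Setting ι R K) : 1 < St.q := by
  rw [St.hq]
  exact one_lt_pow₀ (mod_cast St.hp.one_lt) St.hfdeg.ne'

theorem Setting.q_pos (St : Setting ι R K) : 0 < St.q :=
  one_pos.trans St.one_lt_q

theorem Setting.norm_prod_emb_uniformizer_pow (St : Setting ι R K) (h : ℕ) (k : ι → ℕ) :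
    ‖∏ s, St.emb s (St.ϖ ^ h) ^ k s‖ = St.q ^ (-(wt k * h : ℝ)) := by
  have exponent : (-(wt k * h : ℝ)) = -((h * wt k : ℕ) : ℝ) := by push_cast; ring
  simp only [map_pow, norm_prod, norm_pow, St.norm_emb, St.ν_ϖ, ← pow_mul]
  rw [Finset.prod_pow_eq_pow_sum, ← Finset.mul_sum, exponent, Real.rpow_neg St.q_pos.le,
    Real.rpow_natCast, inv_pow, wt]

theorem exists_norm_taylorCoeff_le [DecidableEq ι] [CharZero K] (St : Setting ι R K) {N : ℕ}
    {k : ι → ℕ} (hk : wt k ≤ N) :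
    ∃ C : ℝ, 0 < C ∧ ∀ (b : (ι → ℕ) → K) (r ε : ℝ) (h : ℕ),
      (∀ z, ‖taylorPoly N b (RingHom.pi St.emb (St.ϖ ^ h * z))‖ * St.q ^ (r * h) ≤ ε) →
        ‖b k‖ * St.q ^ ((r - wt k) * h) ≤ C * ε := by
  obtain ⟨C, hC, bound⟩ := exists_norm_coeff_le_of_linearIndependent
    (linearIndependent_dividedMonomial St.emb_distinct) (mem_Idx.mpr hk)
  refine ⟨C, hC, fun b r ε h hb ↦ ?_⟩
  have hQ : 0 < St.q ^ (r * h) := Real.rpow_pos_of_pos St.q_pos _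
  have rescaled := bound (fun l ↦ b l * ∏ s, St.emb s (St.ϖ ^ h) ^ l s) (ε / St.q ^ (r * h))
    fun z ↦ by
      rw [le_div_iff₀ hQ]
      refine (le_of_eq ?_).trans (hb z)
      simp only [taylorPoly, map_mul, dividedMonomial_mul, mul_assoc, RingHom.pi_apply]
  have exponent : -(wt k * h : ℝ) + r * h = (r - wt k) * h := by ring
  rwa [norm_mul, St.norm_prod_emb_uniformizer_pow, ← mul_div_assoc, le_div_iff₀ hQ, mul_assoc,
    ← Real.rpow_add St.q_pos, exponent] at rescaled

theorem epsTay_eq_sub_taylorPoly [DecidableEq ι] (St : Setting ι R K) (N : ℕ) (f : R → K)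
    (D : (ι → ℕ) → R → K) (x y : R) :
    epsTay St N f D x y = f (x + y) - taylorPoly N (fun k ↦ D k x) (RingHom.pi St.emb y) := by
  simp [epsTay, taylorPoly, dividedMonomial, mpow, mfact, mul_div_assoc, Finset.prod_div_distrib]

theorem taylorPoly_sub_eq_epsTay_sub [DecidableEq ι] (St : Setting ι R K) (N : ℕ) (f : R → K)
    (D D' : (ι → ℕ) → R → K) (x y : R) :
    taylorPoly N (fun k ↦ D k x - D' k x) (RingHom.pi St.emb y) =
      epsTay St N f D' x y - epsTay St N f D x y := by
  simp only [epsTay_eq_sub_taylorPoly, sub_sub_sub_cancel_left]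
  exact taylorPoly_sub ..

theorem taylorPoly_epsTay [DecidableEq ι] [CharZero K] (St : Setting ι R K) (N : ℕ) (f : R → K)
    (D : (ι → ℕ) → R → K) (x y w : R) :
    taylorPoly N (fun i ↦ epsTay St (N - wt i) (D i) (fun j ↦ D (i + j)) x y)
        (RingHom.pi St.emb w) =
      epsTay St N f D x (y + w) - epsTay St N f D (x + y) w := by
  simp only [epsTay_eq_sub_taylorPoly]
  rw [map_add, taylorPoly_add, ← add_assoc, sub_sub_sub_cancel_left, ← taylorPoly_sub]
  rfl

theorem IsCrWith.derivative [DecidableEq ι] [CharZero K] {St : Setting ι R K} {r : ℝ}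
    {f : R → K} {D : (ι → ℕ) → R → K} (hD : IsCrWith St r f D) {i : ι → ℕ}
    (hi : wt i ≤ ⌊r⌋₊) : IsCrWith St (r - wt i) (D i) fun j ↦ D (i + j) := by
  simp only [IsCrWith, Nat.floor_sub_natCast]
  refine ⟨fun j hj ↦ hD.1 _ ?_, fun ε hε ↦ ?_⟩
  · rw [mem_Idx] at hj ⊢
    rw [wt_add]
    omega
  obtain ⟨C, hC, bound⟩ := exists_norm_taylorCoeff_le St hi
  obtain ⟨M, hM⟩ := hD.2 (ε / (2 * C)) (by positivity)
  refine ⟨M, fun h hh x z ↦ ?_⟩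
  have remainder_diff_le (w : R) :
      ‖taylorPoly ⌊r⌋₊ (fun l ↦ epsTay St (⌊r⌋₊ - wt l) (D l) (fun j ↦ D (l + j)) x (St.ϖ ^ h * z))
        (RingHom.pi St.emb (St.ϖ ^ h * w))‖ * St.q ^ (r * h) ≤ ε / (2 * C) + ε / (2 * C) := by
    rw [taylorPoly_epsTay St _ f, ← mul_add]
    exact norm_sub_mul_le_add (Real.rpow_pos_of_pos St.q_pos _).le (hM h hh x (z + w))
      (hM h hh (x + St.ϖ ^ h * z) w)
  refine (bound _ r _ h remainder_diff_le).trans_eq ?_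
  field_simp
  ring

theorem IsCrWith.unique [DecidableEq ι] [CharZero K] {St : Setting ι R K} {r : ℝ} (hr : 0 ≤ r)
    {f : R → K} {D D' : (ι → ℕ) → R → K} (hD : IsCrWith St r f D) (hD' : IsCrWith St r f D')
    {k : ι → ℕ} (hk : wt k ≤ ⌊r⌋₊) : D k = D' k := by
  funext x
  obtain ⟨C, hC, bound⟩ := exists_norm_taylorCoeff_le St hk
  rw [← sub_eq_zero, ← norm_le_zero_iff]
  refine le_of_forall_pos_le_add fun ε hε ↦ ?_
  obtain ⟨M, hM⟩ := hD.2 (ε / (2 * C)) (by positivity)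
  obtain ⟨M', hM'⟩ := hD'.2 (ε / (2 * C)) (by positivity)
  set h := max M M'
  have taylor_diff_le (z : R) :
      ‖taylorPoly ⌊r⌋₊ (fun l ↦ D l x - D' l x) (RingHom.pi St.emb (St.ϖ ^ h * z))‖ *
        St.q ^ (r * h) ≤ ε / (2 * C) + ε / (2 * C) := by
    rw [taylorPoly_sub_eq_epsTay_sub St _ f]
    exact norm_sub_mul_le_add (Real.rpow_pos_of_pos St.q_pos _).le
      (hM' h (le_max_right _ _) x z) (hM h (le_max_left _ _) x z)
  have one_le_scale : 1 ≤ St.q ^ ((r - wt k) * h) :=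
    Real.one_le_rpow St.one_lt_q.le
      (mul_nonneg (sub_nonneg.mpr ((Nat.le_floor_iff hr).mp hk)) h.cast_nonneg)
  calc ‖D k x - D' k x‖ ≤ ‖D k x - D' k x‖ * St.q ^ ((r - wt k) * h) :=
        le_mul_of_one_le_right (norm_nonneg _) one_le_scale
    _ ≤ C * (ε / (2 * C) + ε / (2 * C)) := bound _ r _ h taylor_diff_le
    _ = 0 + ε := by field_simp; ring

end Taylor

theorem statement5_general {S O E : Type*} [Fintype S] [DecidableEq S] [CommRing O]
    [NormedField E] [CharZero E] (St : Setting S O E) (r : ℝ) (hr : 0 ≤ r) (f : O → E)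
    (D D' : (S → ℕ) → O → E) (i j : S → ℕ) (hij : wt i + wt j ≤ ⌊r⌋₊)
    (hD : IsCrWith St r f D) (hD' : IsCrWith St (r - (wt i : ℝ)) (D i) D') :
    D' j = D (i + j) := by
  have hi : wt i ≤ ⌊r⌋₊ := by omega
  have hj : wt j ≤ ⌊r - (wt i : ℝ)⌋₊ := by
    rw [Nat.floor_sub_natCast]
    omega
  exact hD'.unique (sub_nonneg.mpr ((Nat.le_floor_iff hr).mp hi)) (hD.derivative hi) hj

/-- `D_j (D_i f) = D_{i+j} f` whenever `|i| + |j| ≤ [r]`, where `D'` is the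
(unique) family attached to `D_i f ∈ C^{r−|i|}`. -/
theorem statement5 (St : Setting S O E) (r : ℝ) (hr : 0 ≤ r)
    (f : O → E) (D D' : (S → ℕ) → O → E) (i j : S → ℕ)
    (hij : wt i + wt j ≤ ⌊r⌋₊)
    (hD : IsCrWith St r f D)
    (hD' : IsCrWith St (r - (wt i : ℝ)) (D i) D') :
    D' j = D (i + j) :=
  statement5_general St r hr f D D' i j hij hD hD'

end CrPaper
end
end
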